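/- Let L be a bounded pairwise loss function with L ≤ c for some constant c ∈ (0,∞), H the RKHS of a bounded measurable kernel on X, λ > 0, and define R^reg(P) := inf_{f∈H} ( R_{L,P}(f) + λ‖f‖_H² ) for Borel probability measures P on X×Y. Then for all Borel probability measures P, Q on X×Y: |R^reg(Q) − R^reg(P)| ≤ c·d_TV(Q², P²) ≤ 2c·d_TV(Q, P), where Q² = Q⊗Q and P² = P⊗P. Consequently, the maximum bias b₁(ε;P) := sup{ |R^reg(Q) − R^reg(P)| : d_TV(Q,P) ≤ ε } satisfies b₁(ε;P) ≤ 2cε for all ε ∈ (0,1) and all P. -/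

import Mathlib

open MeasureTheory
open scoped RealInnerProductSpace

/-- The regularized risk functional `R^reg(P) = inf_{f ∈ H} (R_{L,P}(f) + λ ‖f‖²_H)`, where the
function induced by `f ∈ H` is `x ↦ ⟪f, Φ x⟫`. -/
noncomputable def regRisk {X : Type*} [MeasurableSpace X] {Y : Set ℝ}
    {H : Type*} [NormedAddCommGroup H] [InnerProductSpace ℝ H]
    (L : X → Y → X → Y → ℝ → ℝ → ℝ) (Φ : X → H) (l : ℝ)
    (P : Measure (X × Y)) : ℝ :=
  ⨅ f : H, ((∫ z : (X × Y) × (X × Y),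
      L z.1.1 z.1.2 z.2.1 z.2.2 ⟪f, Φ z.1.1⟫ ⟪f, Φ z.2.1⟫ ∂(P.prod P)) + l * ‖f‖ ^ 2)

/-- The total variation distance `d_TV(P,Q) = sup_{A measurable} |P(A) - Q(A)|`. -/
noncomputable def distTV {Z : Type*} [MeasurableSpace Z] (P Q : Measure Z) : ℝ :=
  ⨆ (A : Set Z) (_ : MeasurableSet A), |(P A).toReal - (Q A).toReal|

/-! The layer-cake formula writes `∫ g ∂μ` as the integral of `μ {t ≤ g}` over `t ∈ (0, c]` when
`0 ≤ g ≤ c`, so integrals of such `g` are `c`-Lipschitz for the total variation distance. Applied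
to the loss, this bounds the change of the risk of every single predictor; the penalty cancels,
and an infimum moves by at most the uniform bound on its terms. The product is handled one factor
at a time, through the intermediate measure `Q ⊗ P`. -/

section distTV

variable {Z W : Type*} [MeasurableSpace Z] [MeasurableSpace W]

lemma distTV_nonneg (μ ν : Measure Z) : 0 ≤ distTV μ ν :=
  Real.iSup_nonneg fun _ => Real.iSup_nonneg fun _ => abs_nonneg _

lemma distTV_le {μ ν : Measure Z} {d : ℝ} (hd : 0 ≤ d)
    (h : ∀ A, MeasurableSet A → |μ.real A - ν.real A| ≤ d) : distTV μ ν ≤ d :=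
  Real.iSup_le (fun A => Real.iSup_le (h A) hd) hd

lemma abs_measureReal_sub_le_distTV (μ ν : Measure Z) [IsFiniteMeasure μ] [IsFiniteMeasure ν]
    {A : Set Z} (hA : MeasurableSet A) : |μ.real A - ν.real A| ≤ distTV μ ν := by
  have bounded (B : Set Z) : |μ.real B - ν.real B| ≤ μ.real Set.univ + ν.real Set.univ :=
    calc |μ.real B - ν.real B| ≤ |μ.real B| + |ν.real B| := abs_sub _ _
      _ = μ.real B + ν.real B := by
        rw [abs_of_nonneg measureReal_nonneg, abs_of_nonneg measureReal_nonneg]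
      _ ≤ μ.real Set.univ + ν.real Set.univ :=
        add_le_add (measureReal_mono B.subset_univ) (measureReal_mono B.subset_univ)
  have bddAbove : BddAbove (Set.range fun B : Set Z =>
      ⨆ _ : MeasurableSet B, |μ.real B - ν.real B|) :=
    ⟨μ.real Set.univ + ν.real Set.univ, Set.forall_mem_range.2 fun B =>
      Real.iSup_le (fun _ => bounded B) (by positivity)⟩
  calc |μ.real A - ν.real A| = ⨆ _ : MeasurableSet A, |μ.real A - ν.real A| :=
        (ciSup_pos (f := fun _ => |μ.real A - ν.real A|) hA).symm
    _ ≤ distTV μ ν := le_ciSup bddAbove A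

lemma distTV_triangle (μ ν ρ : Measure Z) [IsFiniteMeasure μ] [IsFiniteMeasure ν]
    [IsFiniteMeasure ρ] : distTV μ ρ ≤ distTV μ ν + distTV ν ρ :=
  distTV_le (add_nonneg (distTV_nonneg μ ν) (distTV_nonneg ν ρ)) fun A hA =>
    (abs_sub_le _ (ν.real A) _).trans <|
      add_le_add (abs_measureReal_sub_le_distTV μ ν hA) (abs_measureReal_sub_le_distTV ν ρ hA)

lemma integrableOn_Ioc_measureReal_le (μ : Measure Z) [IsFiniteMeasure μ] (g : Z → ℝ)
    (a b : ℝ) : IntegrableOn (fun t => μ.real {z | t ≤ g z}) (Set.Ioc a b) := by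
  have antitone : Antitone fun t => μ.real {z | t ≤ g z} := fun s t hst =>
    measureReal_mono fun z (hz : t ≤ g z) => hst.trans hz
  exact (antitone.locallyIntegrable.integrableOn_isCompact isCompact_Icc).mono_set
    Set.Ioc_subset_Icc_self

theorem abs_integral_sub_integral_le_mul_distTV (μ ν : Measure Z) [IsFiniteMeasure μ]
    [IsFiniteMeasure ν] {g : Z → ℝ} {c : ℝ} (hc : 0 ≤ c) (hg : Measurable g)
    (hg_mem : ∀ z, g z ∈ Set.Icc 0 c) :
    |∫ z, g z ∂μ - ∫ z, g z ∂ν| ≤ c * distTV μ ν := by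
  have layercake (ρ : Measure Z) [IsFiniteMeasure ρ] :
      ∫ z, g z ∂ρ = ∫ t in Set.Ioc 0 c, ρ.real {z | t ≤ g z} :=
    (Integrable.of_mem_Icc 0 c hg.aemeasurable (.of_forall hg_mem)).integral_eq_integral_Ioc_meas_le
      (.of_forall fun z => (hg_mem z).1) (.of_forall fun z => (hg_mem z).2)
  calc |∫ z, g z ∂μ - ∫ z, g z ∂ν|
      = ‖∫ t in Set.Ioc 0 c, (μ.real {z | t ≤ g z} - ν.real {z | t ≤ g z})‖ := by
        rw [layercake μ, layercake ν, Real.norm_eq_abs,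
          integral_sub (integrableOn_Ioc_measureReal_le μ g 0 c)
            (integrableOn_Ioc_measureReal_le ν g 0 c)]
    _ ≤ distTV μ ν * volume.real (Set.Ioc 0 c) :=
        norm_setIntegral_le_of_norm_le_const measure_Ioc_lt_top fun _ _ =>
          abs_measureReal_sub_le_distTV μ ν (measurableSet_le measurable_const hg)
    _ = c * distTV μ ν := by rw [Real.volume_real_Ioc_of_le hc, sub_zero, mul_comm]

lemma measureReal_prod_eq_integral (μ : Measure Z) (ν : Measure W) [IsFiniteMeasure ν]
    {A : Set (Z × W)} (hA : MeasurableSet A) :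
    (μ.prod ν).real A = ∫ z, ν.real (Prod.mk z ⁻¹' A) ∂μ := by
  rw [measureReal_def, Measure.prod_apply hA]
  exact (integral_toReal (measurable_measure_prodMk_left hA).aemeasurable
    (.of_forall fun _ => measure_lt_top _ _)).symm

lemma distTV_prod_right_le (ρ : Measure Z) (μ ν : Measure W) [IsFiniteMeasure ρ]
    [IsFiniteMeasure μ] [IsFiniteMeasure ν] :
    distTV (ρ.prod μ) (ρ.prod ν) ≤ ρ.real Set.univ * distTV μ ν := by
  refine distTV_le (mul_nonneg measureReal_nonneg (distTV_nonneg μ ν)) fun A hA => ?_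
  calc |(ρ.prod μ).real A - (ρ.prod ν).real A|
      = ‖∫ z, (μ.real (Prod.mk z ⁻¹' A) - ν.real (Prod.mk z ⁻¹' A)) ∂ρ‖ := by
        rw [measureReal_prod_eq_integral ρ μ hA, measureReal_prod_eq_integral ρ ν hA,
          Real.norm_eq_abs,
          integral_sub (Measure.integrable_measure_prodMk_left hA (measure_ne_top _ _))
            (Measure.integrable_measure_prodMk_left hA (measure_ne_top _ _))]
    _ ≤ distTV μ ν * ρ.real Set.univ :=
        norm_integral_le_of_norm_le_const <| .of_forall fun _ =>
          abs_measureReal_sub_le_distTV μ ν (measurable_prodMk_left hA)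
    _ = ρ.real Set.univ * distTV μ ν := mul_comm _ _

lemma distTV_prod_left_le (μ ν : Measure Z) (ρ : Measure W) [IsFiniteMeasure μ]
    [IsFiniteMeasure ν] [IsFiniteMeasure ρ] :
    distTV (μ.prod ρ) (ν.prod ρ) ≤ ρ.real Set.univ * distTV μ ν := by
  refine distTV_le (mul_nonneg measureReal_nonneg (distTV_nonneg μ ν)) fun A hA => ?_
  rw [measureReal_prod_eq_integral μ ρ hA, measureReal_prod_eq_integral ν ρ hA]
  exact abs_integral_sub_integral_le_mul_distTV μ ν measureReal_nonneg
    (measurable_measure_prodMk_left hA).ennreal_toReal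
    fun _ => ⟨measureReal_nonneg, measureReal_mono (Set.subset_univ _)⟩

theorem distTV_prod_le (μ ν : Measure Z) (μ' ν' : Measure W) [IsFiniteMeasure μ]
    [IsFiniteMeasure ν] [IsFiniteMeasure μ'] [IsFiniteMeasure ν'] :
    distTV (μ.prod μ') (ν.prod ν') ≤
      μ.real Set.univ * distTV μ' ν' + ν'.real Set.univ * distTV μ ν :=
  (distTV_triangle _ (μ.prod ν') _).trans <|
    add_le_add (distTV_prod_right_le μ μ' ν') (distTV_prod_left_le μ ν ν')

end distTV

section iInf

variable {ι : Type*} [Nonempty ι] {a b : ι → ℝ} {d : ℝ}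

lemma ciInf_le_ciInf_add_const (ha : BddBelow (Set.range a)) (h : ∀ i, a i ≤ b i + d) :
    ⨅ i, a i ≤ (⨅ i, b i) + d :=
  sub_le_iff_le_add.1 <| le_ciInf fun i => sub_le_iff_le_add.2 <| (ciInf_le ha i).trans (h i)

lemma abs_ciInf_sub_ciInf_le (ha : BddBelow (Set.range a)) (hb : BddBelow (Set.range b))
    (h : ∀ i, |a i - b i| ≤ d) : |(⨅ i, a i) - ⨅ i, b i| ≤ d :=
  abs_sub_le_iff.2
    ⟨sub_le_iff_le_add'.2 <| ciInf_le_ciInf_add_const ha fun i =>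
        sub_le_iff_le_add'.1 (abs_sub_le_iff.1 (h i)).1,
      sub_le_iff_le_add'.2 <| ciInf_le_ciInf_add_const hb fun i =>
        sub_le_iff_le_add'.1 (abs_sub_le_iff.1 (h i)).2⟩

end iInf

section pairwiseRisk

variable {X Y : Type*} [MeasurableSpace X] [MeasurableSpace Y] {L : X → Y → X → Y → ℝ → ℝ → ℝ}

/-- The `L`-risk `R_{L,P}(f)` of a predictor `f` for a pairwise loss `L`, the first summand of the
regularized risk `regRisk`. The loss is curried, and `f` is an arbitrary function rather than an
element of an RKHS. -/
noncomputable def pairwiseRisk (L : X → Y → X → Y → ℝ → ℝ → ℝ) (P : Measure (X × Y))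
    (f : X → ℝ) : ℝ :=
  ∫ z, L z.1.1 z.1.2 z.2.1 z.2.2 (f z.1.1) (f z.2.1) ∂P.prod P

lemma pairwiseRisk_nonneg (hL_nonneg : ∀ x y x' y' t t', 0 ≤ L x y x' y' t t')
    (P : Measure (X × Y)) (f : X → ℝ) : 0 ≤ pairwiseRisk L P f :=
  integral_nonneg fun _ => hL_nonneg _ _ _ _ _ _

lemma abs_pairwiseRisk_sub_le (hL_nonneg : ∀ x y x' y' t t', 0 ≤ L x y x' y' t t')
    (hL_meas : Measurable fun p : (X × Y) × (X × Y) × ℝ × ℝ =>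
      L p.1.1 p.1.2 p.2.1.1 p.2.1.2 p.2.2.1 p.2.2.2)
    {c : ℝ} (hc : 0 ≤ c) (hLbd : ∀ x y x' y' t t', L x y x' y' t t' ≤ c)
    {f : X → ℝ} (hf : Measurable f)
    (P Q : Measure (X × Y)) [IsFiniteMeasure P] [IsFiniteMeasure Q] :
    |pairwiseRisk L Q f - pairwiseRisk L P f| ≤ c * distTV (Q.prod Q) (P.prod P) := by
  have predictions_meas : Measurable fun z : (X × Y) × (X × Y) =>
      (z.1, z.2, f z.1.1, f z.2.1) := by fun_prop
  exact abs_integral_sub_integral_le_mul_distTV _ _ hc (hL_meas.comp predictions_meas)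
    fun _ => ⟨hL_nonneg _ _ _ _ _ _, hLbd _ _ _ _ _ _⟩

end pairwiseRisk

section regRisk

variable {X : Type*} [MeasurableSpace X] {Y : Set ℝ} {L : X → Y → X → Y → ℝ → ℝ → ℝ}
  {H : Type*} [NormedAddCommGroup H] [InnerProductSpace ℝ H]

lemma regRisk_eq_iInf_pairwiseRisk_add (L : X → Y → X → Y → ℝ → ℝ → ℝ) (Φ : X → H) (l : ℝ)
    (P : Measure (X × Y)) :
    regRisk L Φ l P = ⨅ f : H, (pairwiseRisk L P (fun x => ⟪f, Φ x⟫) + l * ‖f‖ ^ 2) :=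
  rfl

lemma bddBelow_range_pairwiseRisk_add (hL_nonneg : ∀ x y x' y' t t', 0 ≤ L x y x' y' t t')
    (Φ : X → H) {l : ℝ} (hl : 0 ≤ l) (P : Measure (X × Y)) :
    BddBelow (Set.range fun f : H => pairwiseRisk L P (fun x => ⟪f, Φ x⟫) + l * ‖f‖ ^ 2) :=
  ⟨0, Set.forall_mem_range.2 fun _ =>
    add_nonneg (pairwiseRisk_nonneg hL_nonneg P _) (by positivity)⟩

theorem abs_regRisk_sub_le (hL_nonneg : ∀ x y x' y' t t', 0 ≤ L x y x' y' t t')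
    (hL_meas : Measurable fun p : (X × Y) × (X × Y) × ℝ × ℝ =>
      L p.1.1 p.1.2 p.2.1.1 p.2.1.2 p.2.2.1 p.2.2.2)
    {c : ℝ} (hc : 0 ≤ c) (hLbd : ∀ x y x' y' t t', L x y x' y' t t' ≤ c)
    {Φ : X → H} (hΦmeas : ∀ f : H, Measurable fun x => ⟪f, Φ x⟫) {l : ℝ} (hl : 0 ≤ l)
    (P Q : Measure (X × Y)) [IsFiniteMeasure P] [IsFiniteMeasure Q] :
    |regRisk L Φ l Q - regRisk L Φ l P| ≤ c * distTV (Q.prod Q) (P.prod P) := by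
  rw [regRisk_eq_iInf_pairwiseRisk_add, regRisk_eq_iInf_pairwiseRisk_add]
  refine abs_ciInf_sub_ciInf_le (bddBelow_range_pairwiseRisk_add hL_nonneg Φ hl Q)
    (bddBelow_range_pairwiseRisk_add hL_nonneg Φ hl P) fun f => ?_
  rw [add_sub_add_right_eq_sub]
  exact abs_pairwiseRisk_sub_le hL_nonneg hL_meas hc hLbd (hΦmeas f) P Q

end regRisk

theorem rpl_bias_bound_tv_general
    {X : Type*} [MeasurableSpace X] {Y : Set ℝ}
    (L : X → Y → X → Y → ℝ → ℝ → ℝ)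
    (hL_nonneg : ∀ x y x' y' t t', 0 ≤ L x y x' y' t t')
    (hL_meas : Measurable fun p : (X × Y) × (X × Y) × ℝ × ℝ =>
      L p.1.1 p.1.2 p.2.1.1 p.2.1.2 p.2.2.1 p.2.2.2)
    (c : ℝ) (hc : 0 ≤ c)
    (hLbd : ∀ x y x' y' t t', L x y x' y' t t' ≤ c)
    {H : Type*} [NormedAddCommGroup H] [InnerProductSpace ℝ H]
    (Φ : X → H) (hΦmeas : ∀ f : H, Measurable fun x => ⟪f, Φ x⟫)
    (l : ℝ) (hl : 0 ≤ l)
    (P Q : Measure (X × Y)) [IsFiniteMeasure P] [IsFiniteMeasure Q] :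
    |regRisk L Φ l Q - regRisk L Φ l P| ≤ c * distTV (Q.prod Q) (P.prod P) ∧
    c * distTV (Q.prod Q) (P.prod P) ≤
      (Q.real Set.univ + P.real Set.univ) * c * distTV Q P ∧
    (∀ ε : ℝ, ∀ Q' : Measure (X × Y), IsFiniteMeasure Q' → distTV Q' P ≤ ε →
      |regRisk L Φ l Q' - regRisk L Φ l P| ≤ (Q'.real Set.univ + P.real Set.univ) * c * ε) := by
  have risk_le (R : Measure (X × Y)) [IsFiniteMeasure R] :
      |regRisk L Φ l R - regRisk L Φ l P| ≤ c * distTV (R.prod R) (P.prod P) :=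
    abs_regRisk_sub_le hL_nonneg hL_meas hc hLbd hΦmeas hl P R
  have prod_le (R : Measure (X × Y)) [IsFiniteMeasure R] :
      c * distTV (R.prod R) (P.prod P) ≤ (R.real Set.univ + P.real Set.univ) * c * distTV R P :=
    calc c * distTV (R.prod R) (P.prod P)
        ≤ c * (R.real Set.univ * distTV R P + P.real Set.univ * distTV R P) :=
          mul_le_mul_of_nonneg_left (distTV_prod_le R P R P) hc
      _ = (R.real Set.univ + P.real Set.univ) * c * distTV R P := by ring
  refine ⟨risk_le Q, prod_le Q, fun ε R _ hRε => ?_⟩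
  exact (risk_le R).trans <| (prod_le R).trans <| by gcongr

/-- **Bounds for the maxbias over total variation neighborhoods.** If the pairwise loss `L` is
bounded by `c` and `H` is the RKHS of a bounded measurable kernel, then for all probability
measures `P`, `Q`: `|R^reg(Q) - R^reg(P)| ≤ c d_TV(Q², P²) ≤ 2c d_TV(Q, P)`, and consequently
the maximum bias over total variation `ε`-neighborhoods of `P` is at most `2cε`. -/
theorem rpl_bias_bound_tv
    {X : Type*} [MeasurableSpace X] {Y : Set ℝ} (hY : IsClosed Y)
    (L : X → Y → X → Y → ℝ → ℝ → ℝ)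
    (hL_nonneg : ∀ x y x' y' t t', 0 ≤ L x y x' y' t t')
    (hL_meas : Measurable fun p : (X × Y) × (X × Y) × ℝ × ℝ =>
      L p.1.1 p.1.2 p.2.1.1 p.2.1.2 p.2.2.1 p.2.2.2)
    (c : ℝ) (hc : 0 < c)
    (hLbd : ∀ x y x' y' t t', L x y x' y' t t' ≤ c)
    {H : Type*} [NormedAddCommGroup H] [InnerProductSpace ℝ H] [CompleteSpace H]
    (Φ : X → H) (κ : ℝ) (hκ : ∀ x, ‖Φ x‖ ≤ κ)
    (hΦmeas : ∀ f : H, Measurable fun x => ⟪f, Φ x⟫)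
    (l : ℝ) (hl : 0 < l)
    (P Q : Measure (X × Y)) (hP : IsProbabilityMeasure P) (hQ : IsProbabilityMeasure Q) :
    |regRisk L Φ l Q - regRisk L Φ l P| ≤ c * distTV (Q.prod Q) (P.prod P) ∧
    c * distTV (Q.prod Q) (P.prod P) ≤ 2 * c * distTV Q P ∧
    (∀ ε : ℝ, 0 < ε → ε < 1 →
      ∀ Q' : Measure (X × Y), IsProbabilityMeasure Q' → distTV Q' P ≤ ε →
        |regRisk L Φ l Q' - regRisk L Φ l P| ≤ 2 * c * ε) := by
  obtain ⟨risk_le, prod_le, bias_le⟩ :=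
    rpl_bias_bound_tv_general L hL_nonneg hL_meas c hc.le hLbd Φ hΦmeas l hl.le P Q
  simp only [probReal_univ, one_add_one_eq_two] at prod_le
  exact ⟨risk_le, prod_le, fun ε _ _ Q' _ hQ' => by
    simpa only [probReal_univ, one_add_one_eq_two] using bias_le ε Q' inferInstance hQ'⟩
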